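/- Let d ≥ 1 and n ≥ 1 be integers and let T be a nonempty subset of ℕ_0^d. If there exist points α and β in E_n^∞(T) such that every coordinate of β − α is a positive integer, then E_n^∞(T) = E_1^∞(T ∪ {α, β}) = Λ(T) ∩ ℕ_0^d. -/

import Mathlib

open MeasureTheory
open scoped Classical ENNReal

noncomputable section

/-- The `d`-dimensional torus, modelled as `d` copies of `ℝ/ℤ`,
whose product `volume` measure is the normalized Haar measure. -/
abbrev Torus (d : ℕ) := Fin d → AddCircle (1 : ℝ)

/-- The character `z ↦ z^α` on the torus. -/
def torusChar {d : ℕ} (α : Fin d → ℤ) (x : Torus d) : ℂ :=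
  ∏ j, fourier (α j) (x j)

/-- The trigonometric polynomial with frequencies in `F` and coefficients `a`. -/
def trigPoly {d : ℕ} (F : Finset (Fin d → ℤ)) (a : (Fin d → ℤ) → ℂ) (x : Torus d) : ℂ :=
  ∑ α ∈ F, a α * torusChar α x

/-- The set `ℕ₀^d` of multi-indices with nonnegative entries. -/
def NN (d : ℕ) : Set (Fin d → ℤ) := {α | ∀ j, 0 ≤ α j}

/-- `Λ` is a coset in `ℤ^d`, i.e. a translate of a subgroup. -/
def IsCoset {d : ℕ} (Λ : Set (Fin d → ℤ)) : Prop :=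
  ∃ (x : Fin d → ℤ) (H : AddSubgroup (Fin d → ℤ)),
    Λ = (x + ·) '' (H : Set (Fin d → ℤ))

/-- `Λ` is a contractive projection set for `L^p(𝕋^d)`:
the projection onto frequencies in `Λ` is contractive on trigonometric polynomials. -/
def IsContractiveLp (d : ℕ) (p : ℝ≥0∞) (Λ : Set (Fin d → ℤ)) : Prop :=
  ∀ (F : Finset (Fin d → ℤ)) (a : (Fin d → ℤ) → ℂ),
    eLpNorm (trigPoly (F.filter (· ∈ Λ)) a) p volume ≤ eLpNorm (trigPoly F a) p volume

/-- `Γ` is a contractive projection set for `H^p(𝕋^d)`: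
the projection onto frequencies in `Γ` is contractive on analytic polynomials. -/
def IsContractiveHp (d : ℕ) (p : ℝ≥0∞) (Γ : Set (Fin d → ℤ)) : Prop :=
  ∀ F : Finset (Fin d → ℤ), ↑F ⊆ NN d → ∀ a : (Fin d → ℤ) → ℂ,
    eLpNorm (trigPoly (F.filter (· ∈ Γ)) a) p volume ≤ eLpNorm (trigPoly F a) p volume

/-- `Γ` has dimension `k`: the subgroup generated by the differences `γ - γ₀` has rank `k`. -/
def HasDim {d : ℕ} (Γ : Set (Fin d → ℤ)) (k : ℕ) : Prop :=
  ∀ γ₀ ∈ Γ, Module.finrank ℤ (Submodule.span ℤ ((· - γ₀) '' Γ)) = k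

/-- `H^p(𝕋^d)` enjoys the contractive restriction property of dimension `k`:
every `k`-dimensional contractive projection set for `H^p(𝕋^d)` is the restriction
of a coset in `ℤ^d` to `ℕ₀^d`. -/
def ContractiveRestrictionProperty (d : ℕ) (p : ℝ≥0∞) (k : ℕ) : Prop :=
  ∀ Γ : Set (Fin d → ℤ), Γ.Nonempty → Γ ⊆ NN d → HasDim Γ k → IsContractiveHp d p Γ →
    ∃ Λ : Set (Fin d → ℤ), IsCoset Λ ∧ Γ = Λ ∩ NN d

/-- The coset `Λ(Γ)` in `ℤ^d` generated by `Γ`. -/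
def cosetGen {d : ℕ} (Γ : Set (Fin d → ℤ)) : Set (Fin d → ℤ) :=
  ⋃ γ₀ ∈ Γ, (γ₀ + ·) '' (AddSubgroup.closure ((· - γ₀) '' Γ) : Set (Fin d → ℤ))

/-- The `n`-extension `E_n(Γ)`: all points of `Λ(Γ) ∩ ℕ₀^d` at distance at most `n` from `Γ`. -/
def Eext {d : ℕ} (n : ℕ) (Γ : Set (Fin d → ℤ)) : Set (Fin d → ℤ) :=
  {lam | lam ∈ cosetGen Γ ∩ NN d ∧ ∃ γ ∈ Γ, ∃ m : (Fin d → ℤ) →₀ ℤ,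
    (↑m.support : Set (Fin d → ℤ)) ⊆ Γ \ {γ} ∧
    lam = γ + ∑ α ∈ m.support, m α • (α - γ) ∧
    (∑ α ∈ m.support, max (m α) 0) ≤ (n : ℤ) ∧
    (∑ α ∈ m.support, max (-(m α)) 0) ≤ (n : ℤ)}

/-- Iterated `n`-extensions `E_n^k(Γ)`. -/
def EextIter {d : ℕ} (n : ℕ) : ℕ → Set (Fin d → ℤ) → Set (Fin d → ℤ)
  | 0, Γ => Eext n Γ
  | (k + 1), Γ => Eext n (EextIter n k Γ)

/-- The `n`-completion `E_n^∞(Γ)`. -/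
def EextInf {d : ℕ} (n : ℕ) (Γ : Set (Fin d → ℤ)) : Set (Fin d → ℤ) :=
  ⋃ k, EextIter n k Γ

/-! Call `v` a period of a set `S` of nonnegative elements if translation by `v` neither enters nor
leaves `S` as long as it stays nonnegative. Since `n ≥ 1`, the completion contains `x + y - z`
whenever it contains `x`, `y`, `z` and the result is nonnegative, so its differences are periods.
The sum of two periods need not be one, as the intermediate point may fail to be nonnegative;
but when the strictly positive vector `β - α` is a period, one can first move far along it, make
both steps there, and come back. All of the group generated by the differences then consists of
periods, hence the completion exhausts its coset. -/

section OrderedGroup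

variable {G : Type*} [AddCommGroup G] [PartialOrder G] {S : Set G} {u v w : G}

/-- `u` is an order unit: it is nonnegative and its multiples are cofinal. Nonnegativity is
required explicitly since it does not follow from cofinality in a general partially ordered
group. -/
def IsOrderUnit (u : G) : Prop :=
  0 ≤ u ∧ ∀ x, ∃ k : ℕ, x ≤ k • u

/-- `S` is stable under completing three of its points to a parallelogram, provided the fourth
vertex is nonnegative; this is all that the argument needs to know about `n`-completions. -/
def IsAddSubClosed (S : Set G) : Prop :=
  ∀ ⦃x⦄, x ∈ S → ∀ ⦃y⦄, y ∈ S → ∀ ⦃z⦄, z ∈ S → 0 ≤ x + y - z → x + y - z ∈ S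

/-- `v` is a period of `S` inside the cone of nonnegative elements. Only nonnegative base points
with a nonnegative translate are tested, so the periods of `S` need not be closed under
addition. -/
def IsNonnegPeriod (S : Set G) (v : G) : Prop :=
  ∀ ⦃x⦄, 0 ≤ x → 0 ≤ x + v → (x + v ∈ S ↔ x ∈ S)

namespace IsNonnegPeriod

lemma neg (hv : IsNonnegPeriod S v) : IsNonnegPeriod S (-v) := fun x hx hxv => by
  simpa using (hv hxv (by simpa using hx)).symm

variable [IsOrderedAddMonoid G]

lemma nsmul (hu₀ : 0 ≤ u) (hu : IsNonnegPeriod S u) (k : ℕ) : IsNonnegPeriod S (k • u) := by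
  induction k with
  | zero => intro x _ _; simp
  | succ k ih =>
    intro x hx hxu
    have hxk : 0 ≤ x + k • u := add_nonneg hx (nsmul_nonneg hu₀ k)
    rw [succ_nsmul, ← add_assoc] at hxu ⊢
    exact (hu hxk hxu).trans (ih hx hxk)

lemma add (hu : IsOrderUnit u) (huS : IsNonnegPeriod S u) (hv : IsNonnegPeriod S v)
    (hw : IsNonnegPeriod S w) : IsNonnegPeriod S (v + w) := by
  intro x hx hxvw
  obtain ⟨k, hk⟩ := hu.2 (-(x + v))
  have hku : 0 ≤ k • u := nsmul_nonneg hu.1 k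
  have hkS : IsNonnegPeriod S (k • u) := nsmul hu.1 huS k
  have hcomm : x + (v + w) + k • u = x + k • u + v + w := by abel
  have hxk : 0 ≤ x + k • u := add_nonneg hx hku
  have hxkv : 0 ≤ x + k • u + v := by
    rw [add_right_comm]
    exact neg_le_iff_add_nonneg'.mp hk
  have hxkvw : 0 ≤ x + (v + w) + k • u := add_nonneg hxvw hku
  calc x + (v + w) ∈ S ↔ x + (v + w) + k • u ∈ S := (hkS hxvw hxkvw).symm
    _ ↔ x + k • u + v + w ∈ S := by rw [hcomm]
    _ ↔ x + k • u + v ∈ S := hw hxkv (hcomm ▸ hxkvw)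
    _ ↔ x + k • u ∈ S := hv hxk hxkv
    _ ↔ x ∈ S := hkS hx hxk

end IsNonnegPeriod

lemma IsAddSubClosed.isNonnegPeriod_sub (hS : IsAddSubClosed S) (hv : v ∈ S) (hw : w ∈ S) :
    IsNonnegPeriod S (v - w) := by
  intro x hx hxvw
  constructor <;> intro h
  · have hback : x + (v - w) + w - v = x := by abel
    exact hback ▸ hS h hw hv (hback.symm ▸ hx)
  · rw [← add_sub_assoc] at hxvw ⊢
    exact hS h hv hw hxvw

variable [IsOrderedAddMonoid G]

/-- The periods of `S` as a subgroup, which they form once one of them is an order unit. -/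
def nonnegPeriods (S : Set G) (hu : IsOrderUnit u) (huS : IsNonnegPeriod S u) :
    AddSubgroup G where
  carrier := {v | IsNonnegPeriod S v}
  zero_mem' := fun x _ _ => by simp
  add_mem' := IsNonnegPeriod.add hu huS
  neg_mem' := IsNonnegPeriod.neg

lemma IsAddSubClosed.isNonnegPeriod_of_mem_vectorSpan (hS : IsAddSubClosed S)
    (hu : IsOrderUnit u) (huS : IsNonnegPeriod S u) (hv : v ∈ vectorSpan ℤ S) :
    IsNonnegPeriod S v := by
  suffices h : vectorSpan ℤ S ≤ (nonnegPeriods S hu huS).toIntSubmodule from h hv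
  rw [vectorSpan_def, Submodule.span_le]
  rintro _ ⟨a, ha, b, hb, rfl⟩
  exact hS.isNonnegPeriod_sub ha hb

theorem IsAddSubClosed.eq_affineSpan_inter_Ici (hS : IsAddSubClosed S) (hS₀ : S ⊆ Set.Ici 0)
    {α β : G} (hα : α ∈ S) (hβ : β ∈ S) (hαβ : IsOrderUnit (β - α)) :
    S = (affineSpan ℤ S : Set G) ∩ Set.Ici 0 := by
  refine Set.Subset.antisymm (Set.subset_inter (subset_affineSpan ℤ S) hS₀) ?_
  rintro x ⟨hxS, hx⟩
  have hxα : x - α ∈ vectorSpan ℤ S :=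
    vsub_mem_vectorSpan_of_mem_affineSpan_of_mem_affineSpan hxS (mem_affineSpan ℤ hα)
  have hperiod : IsNonnegPeriod S (x - α) :=
    hS.isNonnegPeriod_of_mem_vectorSpan hαβ (hS.isNonnegPeriod_sub hβ hα) hxα
  have hadd : α + (x - α) = x := add_sub_cancel α x
  exact hadd ▸ (hperiod (hS₀ hα) (hadd.symm ▸ hx)).mpr hα

end OrderedGroup

lemma isOrderUnit_of_forall_pos {ι R : Type*} [Finite ι] [AddCommGroup R] [PartialOrder R]
    [IsOrderedAddMonoid R] [Archimedean R] {u : ι → R} (hu : ∀ i, 0 < u i) : IsOrderUnit u := by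
  refine ⟨fun i => (hu i).le, fun x => ?_⟩
  choose k hk using fun i => Archimedean.arch (x i) (hu i)
  obtain ⟨K, hK⟩ := Finite.exists_le k
  exact ⟨K, fun i => (hk i).trans (nsmul_le_nsmul_left (hu i).le (hK i))⟩

section Extension

variable {d n : ℕ} {Γ : Set (Fin d → ℤ)}

lemma nn_eq_Ici (d : ℕ) : NN d = Set.Ici 0 := rfl

lemma cosetGen_eq_affineSpan (Γ : Set (Fin d → ℤ)) : cosetGen Γ = affineSpan ℤ Γ := by
  ext x
  have hclosure : ∀ γ ∈ Γ, ∀ v, v ∈ AddSubgroup.closure ((· - γ) '' Γ) ↔ v ∈ vectorSpan ℤ Γ := by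
    intro γ hγ v
    rw [vectorSpan_eq_span_vsub_set_right ℤ hγ, ← Submodule.span_int_eq_addSubgroupClosure]
    rfl
  simp only [cosetGen, Set.mem_iUnion, Set.mem_image, SetLike.mem_coe, exists_prop,
    mem_affineSpan_iff_exists]
  refine exists_congr fun γ => and_congr_right fun hγ => exists_congr fun v => ?_
  rw [hclosure γ hγ, vadd_eq_add, add_comm v γ, eq_comm]

lemma eext_subset_cosetGen_inter_nn : Eext n Γ ⊆ cosetGen Γ ∩ NN d := fun _ hx => hx.1

lemma subset_eext (hΓ : Γ ⊆ NN d) : Γ ⊆ Eext n Γ := fun x hx =>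
  ⟨⟨cosetGen_eq_affineSpan Γ ▸ mem_affineSpan ℤ hx, hΓ hx⟩, x, hx, 0, by simp⟩

/-- Unlike in the definition of `Eext`, zero coefficients and a (vanishing) summand at `γ` are
allowed. -/
lemma add_sum_mem_eext {γ : Fin d → ℤ} {F : Finset (Fin d → ℤ)} {c : (Fin d → ℤ) → ℤ}
    (hγ : γ ∈ Γ) (hF : ↑F ⊆ Γ) (hnonneg : γ + ∑ α ∈ F, c α • (α - γ) ∈ NN d)
    (hpos : ∑ α ∈ F, max (c α) 0 ≤ n) (hneg : ∑ α ∈ F, max (-c α) 0 ≤ n) :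
    γ + ∑ α ∈ F, c α • (α - γ) ∈ Eext n Γ := by
  have hspan : ∑ α ∈ F, c α • (α - γ) ∈ vectorSpan ℤ Γ :=
    Submodule.sum_mem _ fun α hα =>
      Submodule.smul_mem _ _ (vsub_mem_vectorSpan ℤ (hF hα) hγ)
  have hcoset : γ + ∑ α ∈ F, c α • (α - γ) ∈ cosetGen Γ := by
    rw [cosetGen_eq_affineSpan, add_comm]
    exact ⟨γ, hγ, _, hspan, rfl⟩
  let m : (Fin d → ℤ) →₀ ℤ := (Finsupp.indicator F fun α _ => c α).erase γ
  have hm : ∀ α ∈ m.support, m α = c α ∧ α ∈ F ∧ α ≠ γ := by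
    intro α hα
    grind [Finsupp.indicator_apply]
  have hmF : m.support ⊆ F := fun α hα => (hm α hα).2.1
  have hmsum : ∑ α ∈ m.support, m α • (α - γ) = ∑ α ∈ F, c α • (α - γ) := by
    rw [Finset.sum_congr rfl fun α hα => by rw [(hm α hα).1]]
    refine Finset.sum_subset hmF fun α hαF hα => ?_
    obtain rfl | hαγ := eq_or_ne α γ
    · simp
    · have hcα : c α = 0 := by
        grind [Finsupp.indicator_apply]
      simp [hcα]
  have hbound : ∀ f : ℤ → ℤ, ∑ α ∈ F, max (f (c α)) 0 ≤ n →
      ∑ α ∈ m.support, max (f (m α)) 0 ≤ n := by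
    intro f hf
    rw [Finset.sum_congr rfl fun α hα => by rw [(hm α hα).1]]
    exact (Finset.sum_le_sum_of_subset_of_nonneg hmF fun _ _ _ => le_max_right _ _).trans hf
  exact ⟨⟨hcoset, hnonneg⟩, γ, hγ, m, fun α hα => ⟨hF (hmF hα), (hm α hα).2.2⟩, by rw [hmsum],
    hbound id hpos, hbound Neg.neg hneg⟩

lemma add_sub_mem_eext (hn : 1 ≤ n) (hΓ : Γ ⊆ NN d) {x y z : Fin d → ℤ} (hx : x ∈ Γ)
    (hy : y ∈ Γ) (hz : z ∈ Γ) (hnonneg : x + y - z ∈ NN d) : x + y - z ∈ Eext n Γ := by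
  obtain rfl | hyz := eq_or_ne y z
  · simpa using subset_eext hΓ hx
  let c : (Fin d → ℤ) → ℤ := fun α => if α = y then 1 else -1
  have hcy : c y = 1 := if_pos rfl
  have hcz : c z = -1 := if_neg hyz.symm
  have hsum : x + y - z = x + ∑ α ∈ {y, z}, c α • (α - x) := by
    rw [Finset.sum_pair hyz, hcy, hcz, one_smul, neg_one_smul]
    abel
  rw [hsum] at hnonneg ⊢
  refine add_sum_mem_eext hx (by simp [Set.insert_subset_iff, hy, hz]) hnonneg ?_ ?_ <;>
    simpa [Finset.sum_pair hyz, hcy, hcz] using hn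

end Extension

section Completion

variable {d n : ℕ} {Γ : Set (Fin d → ℤ)}

lemma eextIter_subset_nn (k : ℕ) : EextIter n k Γ ⊆ NN d := by
  cases k <;> exact fun _ hx => (eext_subset_cosetGen_inter_nn hx).2

lemma eextIter_mono : Monotone fun k => EextIter n k Γ :=
  monotone_nat_of_le_succ fun k => subset_eext (eextIter_subset_nn k)

lemma eextIter_subset_cosetGen (k : ℕ) : EextIter n k Γ ⊆ cosetGen Γ := by
  induction k with
  | zero => exact fun _ hx => (eext_subset_cosetGen_inter_nn hx).1
  | succ k ih =>
    intro x hx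
    have hx' := (eext_subset_cosetGen_inter_nn hx).1
    rw [cosetGen_eq_affineSpan] at ih hx' ⊢
    exact affineSpan_le.mpr ih hx'

lemma subset_eextInf (hΓ : Γ ⊆ NN d) : Γ ⊆ EextInf n Γ :=
  (subset_eext hΓ).trans (Set.subset_iUnion (fun k => EextIter n k Γ) 0)

lemma eextInf_subset_cosetGen_inter_nn : EextInf n Γ ⊆ cosetGen Γ ∩ NN d :=
  Set.iUnion_subset fun k =>
    Set.subset_inter (eextIter_subset_cosetGen k) (eextIter_subset_nn k)

lemma isAddSubClosed_eextInf (hn : 1 ≤ n) : IsAddSubClosed (EextInf n Γ) := by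
  intro x hx y hy z hz hnonneg
  obtain ⟨i, hi⟩ := Set.mem_iUnion.mp hx
  obtain ⟨j, hj⟩ := Set.mem_iUnion.mp hy
  obtain ⟨k, hk⟩ := Set.mem_iUnion.mp hz
  have hmem : ∀ {l}, l ≤ i + j + k → EextIter n l Γ ⊆ EextIter n (i + j + k) Γ :=
    fun hl => eextIter_mono hl
  exact Set.mem_iUnion.mpr ⟨i + j + k + 1, add_sub_mem_eext hn (eextIter_subset_nn _)
    (hmem (by omega) hi) (hmem (by omega) hj) (hmem (by omega) hk) hnonneg⟩

lemma cosetGen_eq_of_subset_of_subset {Γ' : Set (Fin d → ℤ)} (h : Γ ⊆ Γ')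
    (h' : Γ' ⊆ cosetGen Γ) : cosetGen Γ' = cosetGen Γ := by
  rw [cosetGen_eq_affineSpan] at h'
  rw [cosetGen_eq_affineSpan, cosetGen_eq_affineSpan]
  exact congrArg _ (le_antisymm (affineSpan_le.mpr h') (affineSpan_mono ℤ h))

theorem eextInf_eq_cosetGen_inter_nn (hn : 1 ≤ n) (hΓ : Γ ⊆ NN d) {α β : Fin d → ℤ}
    (hα : α ∈ EextInf n Γ) (hβ : β ∈ EextInf n Γ) (hαβ : IsOrderUnit (β - α)) :
    EextInf n Γ = cosetGen Γ ∩ NN d := by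
  have hsub : EextInf n Γ ⊆ cosetGen Γ ∩ NN d := eextInf_subset_cosetGen_inter_nn
  have hcoset : cosetGen (EextInf n Γ) = cosetGen Γ :=
    cosetGen_eq_of_subset_of_subset (subset_eextInf hΓ) (hsub.trans Set.inter_subset_left)
  rw [← hcoset, cosetGen_eq_affineSpan, nn_eq_Ici]
  exact (isAddSubClosed_eextInf hn).eq_affineSpan_inter_Ici (hsub.trans Set.inter_subset_right)
    hα hβ hαβ

end Completion

/-- If `α, β ∈ E_n^∞(T)` and all coordinates of `β - α` are positive, then
`E_n^∞(T) = E_1^∞(T ∪ {α, β}) = Λ(T) ∩ ℕ₀^d`. -/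
theorem plus_completion (d n : ℕ) (hd : 1 ≤ d) (hn : 1 ≤ n) (T : Set (Fin d → ℤ))
    (hne : T.Nonempty) (hT : T ⊆ NN d) (α β : Fin d → ℤ)
    (hα : α ∈ EextInf n T) (hβ : β ∈ EextInf n T) (hpos : ∀ j, 0 < (β - α) j) :
    EextInf n T = EextInf 1 (T ∪ {α, β}) ∧ EextInf n T = cosetGen T ∩ NN d := by
  have hαβ : IsOrderUnit (β - α) := isOrderUnit_of_forall_pos hpos
  have hcompl : EextInf n T = cosetGen T ∩ NN d := eextInf_eq_cosetGen_inter_nn hn hT hα hβ hαβ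
  have hsub : T ∪ {α, β} ⊆ cosetGen T ∩ NN d :=
    hcompl ▸ Set.union_subset (subset_eextInf hT) (Set.pair_subset hα hβ)
  have hnn : T ∪ {α, β} ⊆ NN d := hsub.trans Set.inter_subset_right
  have hcoset : cosetGen (T ∪ {α, β}) = cosetGen T :=
    cosetGen_eq_of_subset_of_subset Set.subset_union_left (hsub.trans Set.inter_subset_left)
  have hcompl' : EextInf 1 (T ∪ {α, β}) = cosetGen (T ∪ {α, β}) ∩ NN d :=
    eextInf_eq_cosetGen_inter_nn le_rfl hnn (subset_eextInf hnn (by simp))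
      (subset_eextInf hnn (by simp)) hαβ
  exact ⟨by rw [hcompl, hcompl', hcoset], hcompl⟩

end
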